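/- arXiv:2303.15031 — 5 statements merged into one kernel-verified Lean document; each statement's English description precedes it below -/
import Mathlib

section
/- Let A be a type and let f : A → A → A be a choice function for pairs, i.e. f a b ∈ {a, b} and f a b = f b a for all a, b ∈ A (hence f a a = a). Then f is associative — f (f a b) c = f a (f b c) for all a, b, c ∈ A — if and only if there exists a linear order on A such that f a b = min(a, b) for all a, b ∈ A. -/
/-! For an associative choice function, `a ≤ b ↔ f a b = a` is the order of a meet-semilattice
with meet `f`; that every meet is one of its two arguments says that this order is total. -/

section SemilatticeInf

variable {α : Type*} [SemilatticeInf α]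

theorem le_total_of_inf_eq_or (h : ∀ a b : α, a ⊓ b = a ∨ a ⊓ b = b) (a b : α) :
    a ≤ b ∨ b ≤ a :=
  (h a b).imp inf_eq_left.mp inf_eq_right.mp

variable (α) in
/-- A totally ordered meet-semilattice as a linear order. The field `min` is the given meet, so
that the two agree definitionally. -/
abbrev linearOrderOfSemilatticeInf [DecidableLE α] [Std.Total (α := α) (· ≤ ·)] :
    LinearOrder α where
  min := (· ⊓ ·)
  le_total := total_of (· ≤ ·)
  toDecidableLE := ‹_›
  min_def := congr_fun₂ inf_eq_minDefault

end SemilatticeInf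

/-- **Associative choice functions are exactly minima of linear orders.**
Let `A` be a type and `f : A → A → A` a choice function for pairs, i.e.
`f a b ∈ {a, b}` and `f a b = f b a` for all `a b : A`.  Then `f` is associative
if and only if there is a linear order on `A` with `f a b = min a b` for all `a b`. -/
theorem associative_choice_iff_min_of_linearOrder {A : Type*} (f : A → A → A)
    (hchoice : ∀ a b : A, f a b = a ∨ f a b = b)
    (hcomm : ∀ a b : A, f a b = f b a) :
    (∀ a b c : A, f (f a b) c = f a (f b c)) ↔
      ∃ inst : LinearOrder A, ∀ a b : A, f a b = @Min.min A inst.toMin a b := by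
  constructor
  · intro hassoc
    classical
    have hidem (a : A) : f a a = a := or_self_iff.mp (hchoice a a)
    let : Min A := ⟨f⟩
    let : SemilatticeInf A := SemilatticeInf.mk' hcomm hassoc hidem
    have : Std.Total (α := A) (· ≤ ·) := ⟨le_total_of_inf_eq_or hchoice⟩
    exact ⟨linearOrderOfSemilatticeInf A, fun _ _ ↦ rfl⟩
  · rintro ⟨_, hmin⟩ a b c
    simpa only [hmin] using min_assoc a b c
end

section
/- Let L be a first-order language, let t₁, t₂ be closed L-terms, and let α(v) be an L-formula in one free variable such that both α(t₁) ∧ ¬α(t₂) and ¬α(t₁) ∧ α(t₂) are satisfiable (each holds in some L-structure). Then for every choice function f on the set of L-formulas (f φ ψ ∈ {φ, ψ} and f φ ψ = f ψ φ) there exist an L-structure M and an ordering (s₁, s₂) of the pair (t₁, t₂) — i.e. (s₁, s₂) = (t₁, t₂) or (s₁, s₂) = (t₂, t₁) — such that M satisfies the sentence ∀v₁∀v₂ (v₁ = s₁ ∧ v₂ = s₂ → χ(v₁, v₂)) but M does not satisfy the sentence (s₁ = s₁ ∧ s₂ = s₂ → χ'), where χ(v₁, v₂) := f (α(v₁)) (α(v₂))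 (the formula chosen by f from the pair {α(v₁), α(v₂)}, with v₁, v₂ distinct variables) and χ' := f (α(s₁)) (α(s₂)). This expresses that under formula choice semantics the Universal Instantiation scheme ∀v₁∀v₂ ψ(v₁, v₂) → ψ(s₁, s₂) fails in ⟨M, f⟩ for ψ(v₁, v₂) := (v₁ = s₁ ∧ v₂ = s₂ → α(v₁)|α(v₂)). -/
/-!
Let `f` pick `α(b)` from `{α(a), α(b)}`, where `{a, b} = {t₁, t₂}`, and take `M` satisfying `α(a)`
but not `α(b)`: by commutativity the instance at `a, b`, in either order, says `α(b)` and is false.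
On the variables `f` picks `α(v₁)` or `α(v₂)`, once and for all; placing `a` at the position of
the chosen variable makes the universal premise say `α(a)`, which is true.
-/

open FirstOrder Language

/-- A bundled nonempty `L`-structure. -/
structure LStruct (L : Language) where
  Carrier : Type
  [struc : L.Structure Carrier]
  [nonemp : Nonempty Carrier]

attribute [instance] LStruct.struc LStruct.nonemp

instance {L : Language} : CoeSort (LStruct L) Type := ⟨LStruct.Carrier⟩

/-- A choice function on the unordered pairs of elements of `A`, curried as a commutative
binary function. -/
structure IsChoiceFunction {A : Type*} (f : A → A → A) : Prop where
  eq_or_eq : ∀ a b, f a b = a ∨ f a b = b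
  comm : ∀ a b, f a b = f b a

section

variable {L : Language} {V M : Type*} [L.Structure M]

theorem realize_subst_const_iff {β : Type*} {α : L.Formula β} {u : L.Term V} {t : L.Term Empty}
    {v : V → M} (hut : u.realize v = (t.relabel Empty.elim : L.Term V).realize v) :
    Formula.Realize (α.subst fun _ => u) v ↔ M ⊨ (α.subst fun _ => t : L.Sentence) := by
  have hempty : v ∘ Empty.elim = (default : Empty → M) := Subsingleton.elim _ _
  rw [Term.realize_relabel, hempty] at hut
  simp only [Sentence.Realize, Formula.Realize, BoundedFormula.realize_subst, hut]

/-- The collapse under `f` of the formula `ψ(u₁, u₂)`, where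
`ψ(v₁, v₂) := (v₁ = s₁ ∧ v₂ = s₂ → α(v₁)|α(v₂))`. Both the premise of Universal Instantiation
(`u₁, u₂` variables) and its conclusion (`u₁, u₂` the terms `s₁, s₂`) have this form. The choice
is made after the substitution, which is what lets the two disagree. -/
def collapsedImp (f : L.Formula V → L.Formula V → L.Formula V) (α : L.Formula (Fin 1))
    (s₁ s₂ : L.Term Empty) (u₁ u₂ : L.Term V) : L.Formula V :=
  (Term.equal u₁ (s₁.relabel Empty.elim) ⊓ Term.equal u₂ (s₂.relabel Empty.elim)) ⟹
    f (α.subst fun _ => u₁) (α.subst fun _ => u₂)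

variable {f : L.Formula V → L.Formula V → L.Formula V} {α : L.Formula (Fin 1)}
  {s₁ s₂ a b : L.Term Empty} {u₁ u₂ : L.Term V} {x y : V}

theorem realize_collapsedImp_of_eq_left {v : V → M}
    (hf : f (α.subst fun _ => u₁) (α.subst fun _ => u₂) = α.subst fun _ => u₁) :
    (collapsedImp f α s₁ s₂ u₁ u₂).Realize v ↔
      (u₁.realize v = (s₁.relabel Empty.elim : L.Term V).realize v →
        u₂.realize v = (s₂.relabel Empty.elim : L.Term V).realize v →
          M ⊨ (α.subst fun _ => s₁ : L.Sentence)) := by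
  rw [collapsedImp, hf, Formula.realize_imp, Formula.realize_inf, Formula.realize_equal,
    Formula.realize_equal, and_imp]
  exact forall_congr' fun h₁ => imp_congr_right fun _ => realize_subst_const_iff h₁

theorem realize_collapsedImp_of_eq_right {v : V → M}
    (hf : f (α.subst fun _ => u₁) (α.subst fun _ => u₂) = α.subst fun _ => u₂) :
    (collapsedImp f α s₁ s₂ u₁ u₂).Realize v ↔
      (u₁.realize v = (s₁.relabel Empty.elim : L.Term V).realize v →
        u₂.realize v = (s₂.relabel Empty.elim : L.Term V).realize v →
          M ⊨ (α.subst fun _ => s₂ : L.Sentence)) := by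
  rw [collapsedImp, hf, Formula.realize_imp, Formula.realize_inf, Formula.realize_equal,
    Formula.realize_equal, and_imp]
  exact imp_congr_right fun _ => forall_congr' fun h₂ => realize_subst_const_iff h₂

variable (M f α x y s₁ s₂) in
/-- `⟨M, f⟩` violates Universal Instantiation from the variables `x, y` to the closed terms
`s₁, s₂`, for `ψ` as in `collapsedImp`. Universal closure is encoded by quantifying over all
assignments. -/
def InstantiationFails : Prop :=
  (∀ v : V → M, (collapsedImp f α s₁ s₂ (Term.var x) (Term.var y)).Realize v) ∧
    ¬ ∀ v : V → M, (collapsedImp f α s₁ s₂ (s₁.relabel Empty.elim)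
      (s₂.relabel Empty.elim)).Realize v

theorem instantiationFails_of_eq_left_of_eq_right [Nonempty M]
    (hvar : f (α.subst fun _ => Term.var x) (α.subst fun _ => Term.var y) =
      α.subst fun _ => Term.var x)
    (hterm : f (α.subst fun _ => s₁.relabel Empty.elim) (α.subst fun _ => s₂.relabel Empty.elim) =
      α.subst fun _ => s₂.relabel Empty.elim)
    (h₁ : M ⊨ (α.subst fun _ => s₁ : L.Sentence))
    (h₂ : ¬ M ⊨ (α.subst fun _ => s₂ : L.Sentence)) :
    InstantiationFails M f α s₁ s₂ x y := by
  refine ⟨fun v => (realize_collapsedImp_of_eq_left hvar).2 fun _ _ => h₁, fun h => ?_⟩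
  obtain ⟨v⟩ : Nonempty (V → M) := inferInstance
  exact h₂ ((realize_collapsedImp_of_eq_right hterm).1 (h v) rfl rfl)

theorem instantiationFails_of_eq_right_of_eq_left [Nonempty M]
    (hvar : f (α.subst fun _ => Term.var x) (α.subst fun _ => Term.var y) =
      α.subst fun _ => Term.var y)
    (hterm : f (α.subst fun _ => s₁.relabel Empty.elim) (α.subst fun _ => s₂.relabel Empty.elim) =
      α.subst fun _ => s₁.relabel Empty.elim)
    (h₁ : ¬ M ⊨ (α.subst fun _ => s₁ : L.Sentence))
    (h₂ : M ⊨ (α.subst fun _ => s₂ : L.Sentence)) :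
    InstantiationFails M f α s₁ s₂ x y := by
  refine ⟨fun v => (realize_collapsedImp_of_eq_right hvar).2 fun _ _ => h₂, fun h => ?_⟩
  obtain ⟨v⟩ : Nonempty (V → M) := inferInstance
  exact h₁ ((realize_collapsedImp_of_eq_left hterm).1 (h v) rfl rfl)

variable (x y) in
theorem IsChoiceFunction.exists_order_instantiationFails [Nonempty M] (hf : IsChoiceFunction f)
    (hab : f (α.subst fun _ => a.relabel Empty.elim) (α.subst fun _ => b.relabel Empty.elim) =
      α.subst fun _ => b.relabel Empty.elim)
    (ha : M ⊨ (α.subst fun _ => a : L.Sentence))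
    (hb : ¬ M ⊨ (α.subst fun _ => b : L.Sentence)) :
    ∃ s₁ s₂ : L.Term Empty,
      ((s₁, s₂) = (a, b) ∨ (s₁, s₂) = (b, a)) ∧ InstantiationFails M f α s₁ s₂ x y := by
  rcases hf.eq_or_eq (α.subst fun _ => Term.var x) (α.subst fun _ => Term.var y) with hx | hy
  · exact ⟨a, b, .inl rfl, instantiationFails_of_eq_left_of_eq_right hx hab ha hb⟩
  · exact ⟨b, a, .inr rfl,
      instantiationFails_of_eq_right_of_eq_left hy ((hf.comm _ _).trans hab) hb ha⟩

end

/-- **Failure of Universal Instantiation under formula choice semantics.**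
Let `t₁, t₂` be closed `L`-terms and `α` an `L`-formula in one free variable such that
both `α(t₁) ∧ ¬α(t₂)` and `¬α(t₁) ∧ α(t₂)` are satisfiable.  Then for every choice
function `f` on `L`-formulas there are an `L`-structure `M` and an ordering `(s₁, s₂)`
of `(t₁, t₂)` such that `M` satisfies `∀v₁∀v₂ (v₁ = s₁ ∧ v₂ = s₂ → χ(v₁,v₂))` but not
`(s₁ = s₁ ∧ s₂ = s₂ → χ')`, where `χ(v₁,v₂) := f (α(v₁)) (α(v₂))` and
`χ' := f (α(s₁)) (α(s₂))`. -/
theorem universal_instantiation_fails (L : Language)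
    (t₁ t₂ : L.Term Empty) (α : L.Formula (Fin 1))
    (hsat₁ : ∃ M : LStruct L,
      M.Carrier ⊨ ((α.subst fun _ => t₁) ⊓ ∼(α.subst fun _ => t₂) : L.Sentence))
    (hsat₂ : ∃ M : LStruct L,
      M.Carrier ⊨ (∼(α.subst fun _ => t₁) ⊓ (α.subst fun _ => t₂) : L.Sentence))
    (f : L.Formula ℕ → L.Formula ℕ → L.Formula ℕ)
    (hchoice : ∀ φ ψ : L.Formula ℕ, f φ ψ = φ ∨ f φ ψ = ψ)
    (hcomm : ∀ φ ψ : L.Formula ℕ, f φ ψ = f ψ φ) :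
    ∃ (M : LStruct L) (s₁ s₂ : L.Term Empty),
      ((s₁, s₂) = (t₁, t₂) ∨ (s₁, s₂) = (t₂, t₁)) ∧
      (∀ v : ℕ → M.Carrier,
        Formula.Realize
          ((Term.equal (Term.var 0) (s₁.relabel Empty.elim) ⊓
              Term.equal (Term.var 1) (s₂.relabel Empty.elim)) ⟹
            f (α.subst fun _ => Term.var 0) (α.subst fun _ => Term.var 1)) v) ∧
      ¬ (∀ v : ℕ → M.Carrier,
        Formula.Realize
          ((Term.equal (s₁.relabel Empty.elim) (s₁.relabel Empty.elim) ⊓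
              Term.equal (s₂.relabel Empty.elim) (s₂.relabel Empty.elim)) ⟹
            f (α.subst fun _ => s₁.relabel Empty.elim)
              (α.subst fun _ => s₂.relabel Empty.elim)) v) := by
  have hf : IsChoiceFunction f := ⟨hchoice, hcomm⟩
  rcases hchoice (α.subst fun _ => t₁.relabel Empty.elim)
    (α.subst fun _ => t₂.relabel Empty.elim) with ht₁ | ht₂
  · obtain ⟨M, hM⟩ := hsat₂
    obtain ⟨hnot₁, h₂⟩ := Formula.realize_inf.1 hM
    obtain ⟨s₁, s₂, hs, hfails⟩ := hf.exists_order_instantiationFails 0 1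
      ((hcomm _ _).trans ht₁) h₂ (Formula.realize_not.1 hnot₁)
    exact ⟨M, s₁, s₂, hs.symm, hfails⟩
  · obtain ⟨M, hM⟩ := hsat₁
    obtain ⟨h₁, hnot₂⟩ := Formula.realize_inf.1 hM
    obtain ⟨s₁, s₂, hs, hfails⟩ := hf.exists_order_instantiationFails 0 1
      ht₂ h₁ (Formula.realize_not.1 hnot₂)
    exact ⟨M, s₁, s₂, hs, hfails⟩
end

section
/- Let L be a first-order language, let t₁, t₂ be closed L-terms, and let α(v) be an L-formula in one free variable such that both α(t₁) ∧ ¬α(t₂) and ¬α(t₁) ∧ α(t₂) are satisfiable. Then for every choice function f on the set of L-formulas (f φ ψ ∈ {φ, ψ} and f φ ψ = f ψ φ) the Existential Generalization scheme φ(t) → ∃v φ(v) fails under formula choice semantics: there exist an L-structure M and an ordering (s₁, s₂) of (t₁, t₂) such that M satisfies the sentence ¬(s₁ = s₁ ∧ s₂ = s₂ → χ') and M satisfies the sentence ¬∃v₁∃v₂ ¬(v₁ = s₁ ∧ v₂ = s₂ → χ(v₁, v₂)), where χ(v₁, v₂) := f (α(v₁)) (α(v₂)) (with v₁, v₂ distinct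 variables) and χ' := f (α(s₁)) (α(s₂)). -/
/-!
The choice `χ` between `α(v₁)` and `α(v₂)` is made by position, once and for all, whereas by
symmetry the choice `χ'` between `α(t₁)` and `α(t₂)` does not depend on the order of the two
terms. Let `c` be the term such that `α(c)` is chosen and let `u` be the other one. Listing `u` in
the position picked by `χ` makes `χ` equivalent to `α(u)` as soon as `v₁, v₂` are the two terms,
while `χ'` is `α(c)`. Hence Existential Generalization fails in a model of `α(u) ∧ ¬α(c)`.
-/

open FirstOrder Language

section Choice

variable {ι A : Type*}

theorem exists_sym2_choice_eq_left {f : A → A → A} (hchoice : ∀ a b, f a b = a ∨ f a b = b)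
    (hcomm : ∀ a b, f a b = f b a) (g : ι → A) (x y : ι) :
    ∃ c u : ι, s(c, u) = s(x, y) ∧ f (g c) (g u) = g c := by
  rcases hchoice (g x) (g y) with h | h
  · exact ⟨x, y, rfl, h⟩
  · exact ⟨y, x, Sym2.eq_swap, (hcomm _ _).trans h⟩

end Choice

section Realize

variable {L : Language} {M : Type*} [L.Structure M] {β γ γ' : Type*}

theorem realize_relabel_emptyElim (s : L.Term Empty) (v : γ → M) :
    (s.relabel Empty.elim : L.Term γ).realize v = s.realize default :=
  Term.realize_relabel.trans (congrArg s.realize (Subsingleton.elim _ _))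

theorem realize_subst_congr (φ : L.Formula β) {t : β → L.Term γ} {t' : β → L.Term γ'}
    {v : γ → M} {v' : γ' → M} (h : ∀ b, (t b).realize v = (t' b).realize v') :
    Formula.Realize (φ.subst t) v ↔ Formula.Realize (φ.subst t') v' := by
  simp only [Formula.Realize, BoundedFormula.realize_subst, h]

theorem realize_not_refl_imp_iff (s t : L.Term γ) (φ : L.Formula γ) (v : γ → M) :
    Formula.Realize (∼((Term.equal s s ⊓ Term.equal t t) ⟹ φ)) v ↔ ¬φ.Realize v := by
  simp only [Formula.realize_not, Formula.realize_imp, Formula.realize_inf,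
    Formula.realize_equal, and_self, forall_const]

theorem not_exists_realize_not_var_equal_imp_iff (x y : γ) (s t : L.Term Empty)
    (φ : L.Formula γ) :
    (¬∃ v : γ → M, Formula.Realize
      (∼((Term.equal (Term.var x) (s.relabel Empty.elim) ⊓
          Term.equal (Term.var y) (t.relabel Empty.elim)) ⟹ φ)) v) ↔
      ∀ v : γ → M, v x = s.realize default → v y = t.realize default → φ.Realize v := by
  simp only [Formula.realize_not, Formula.realize_imp, Formula.realize_inf,
    Formula.realize_equal, Term.realize_var, realize_relabel_emptyElim, not_exists, not_not,
    and_imp]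

end Realize

/-- **Failure of Existential Generalization under formula choice semantics.**
Let `t₁, t₂` be closed `L`-terms and `α` an `L`-formula in one free variable such that
both `α(t₁) ∧ ¬α(t₂)` and `¬α(t₁) ∧ α(t₂)` are satisfiable.  Then for every choice
function `f` on `L`-formulas there are an `L`-structure `M` and an ordering `(s₁, s₂)`
of `(t₁, t₂)` such that `M` satisfies `¬(s₁ = s₁ ∧ s₂ = s₂ → χ')` and `M` satisfies
`¬∃v₁∃v₂ ¬(v₁ = s₁ ∧ v₂ = s₂ → χ(v₁,v₂))`, where `χ(v₁,v₂) := f (α(v₁)) (α(v₂))` and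
`χ' := f (α(s₁)) (α(s₂))`. -/
theorem existential_generalization_fails (L : Language)
    (t₁ t₂ : L.Term Empty) (α : L.Formula (Fin 1))
    (hsat₁ : ∃ M : LStruct L,
      M.Carrier ⊨ ((α.subst fun _ => t₁) ⊓ ∼(α.subst fun _ => t₂) : L.Sentence))
    (hsat₂ : ∃ M : LStruct L,
      M.Carrier ⊨ (∼(α.subst fun _ => t₁) ⊓ (α.subst fun _ => t₂) : L.Sentence))
    (f : L.Formula ℕ → L.Formula ℕ → L.Formula ℕ)
    (hchoice : ∀ φ ψ : L.Formula ℕ, f φ ψ = φ ∨ f φ ψ = ψ)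
    (hcomm : ∀ φ ψ : L.Formula ℕ, f φ ψ = f ψ φ) :
    ∃ (M : LStruct L) (s₁ s₂ : L.Term Empty),
      ((s₁, s₂) = (t₁, t₂) ∨ (s₁, s₂) = (t₂, t₁)) ∧
      (∀ v : ℕ → M.Carrier,
        Formula.Realize
          (∼((Term.equal (s₁.relabel Empty.elim) (s₁.relabel Empty.elim) ⊓
                Term.equal (s₂.relabel Empty.elim) (s₂.relabel Empty.elim)) ⟹
              f (α.subst fun _ => s₁.relabel Empty.elim)
                (α.subst fun _ => s₂.relabel Empty.elim))) v) ∧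
      ¬ (∃ v : ℕ → M.Carrier,
          Formula.Realize
            (∼((Term.equal (Term.var 0) (s₁.relabel Empty.elim) ⊓
                  Term.equal (Term.var 1) (s₂.relabel Empty.elim)) ⟹
                f (α.subst fun _ => Term.var 0) (α.subst fun _ => Term.var 1))) v) := by
  obtain ⟨c, u, hcu, hfc⟩ := exists_sym2_choice_eq_left hchoice hcomm
    (fun s : L.Term Empty => α.subst fun _ => s.relabel Empty.elim) t₁ t₂
  obtain ⟨M, hu, hc⟩ : ∃ M : LStruct L, M.Carrier ⊨ (α.subst fun _ => u : L.Sentence) ∧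
      ¬M.Carrier ⊨ (α.subst fun _ => c : L.Sentence) := by
    rcases Sym2.eq_iff.1 hcu with ⟨rfl, rfl⟩ | ⟨rfl, rfl⟩
    · exact hsat₂.imp fun _ => And.symm ∘ Formula.realize_inf.1
    · exact hsat₁.imp fun _ => Formula.realize_inf.1
  have chosen_false (v : ℕ → M.Carrier) :
      ¬Formula.Realize (α.subst fun _ => c.relabel Empty.elim) v :=
    mt (realize_subst_congr α fun _ => realize_relabel_emptyElim c v).1 hc
  have unchosen_true (v : ℕ → M.Carrier) (n : ℕ) (hn : v n = u.realize default) :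
      Formula.Realize (α.subst fun _ => Term.var n) v :=
    (realize_subst_congr α fun _ => (Term.realize_var v n).trans hn).2 hu
  rcases hchoice (α.subst fun _ => Term.var 0) (α.subst fun _ => Term.var 1) with hχ | hχ
  · refine ⟨M, u, c, Sym2.mk_eq_mk_iff.1 (Sym2.eq_swap.trans hcu), fun v => ?_, ?_⟩
    · exact (realize_not_refl_imp_iff ..).2 (((hcomm _ _).trans hfc).symm ▸ chosen_false v)
    · exact (not_exists_realize_not_var_equal_imp_iff ..).2
        fun v h₀ _ => hχ.symm ▸ unchosen_true v 0 h₀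
  · refine ⟨M, c, u, Sym2.mk_eq_mk_iff.1 hcu, fun v => ?_, ?_⟩
    · exact (realize_not_refl_imp_iff ..).2 (hfc.symm ▸ chosen_false v)
    · exact (not_exists_realize_not_var_equal_imp_iff ..).2
        fun v _ h₁ => hχ.symm ▸ unchosen_true v 1 h₁
end

section
/- Let L be a first-order language, M an L-structure, and a, b two distinct elements of M. Let L(M) be the language L augmented with a constant symbol for each element of M, and regard M as an L(M)-structure in the canonical way. Then for every choice function f on the set of L(M)-sentences (f σ τ ∈ {σ, τ} and f σ τ = f τ σ) that is regular — i.e. whenever σ and σ' are semantically equivalent L(M)-sentences, f σ τ is semantically equivalent to f σ' τ — it is NOT the case that there is exactly one x ∈ M for which M satisfies the sentence f((x = a), (x = b)) (where x, a, b denote the corresponding constant symbols). Hence no regular choice function f makes ⟨M, f⟩ satisfy (∃! v)((v = a)|(v = b)) under sentence choice semantics. -/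
open FirstOrder Language

universe w

/-- Two sentences of a language `L'` are semantically equivalent if they are true in
exactly the same (nonempty) `L'`-structures. -/
def SenEquiv (L' : Language) (σ τ : L'.Sentence) : Prop :=
  ∀ (N : Type w) [L'.Structure N] [Nonempty N], (N ⊨ σ ↔ N ⊨ τ)

/-! Regularity and commutativity let `f` respect semantic equivalence in both arguments. As
`a = a` is equivalent to `b = b` and `a = b` to `b = a`, the sentences `f (a = a) (a = b)` and
`f (b = a) (b = b)` are equivalent, so `a` and `b` are witnesses together or not at all. Choice
admits no third witness, so there are either none or two. -/

variable {L' : Language}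

theorem SenEquiv.trans {σ τ ρ : L'.Sentence} (h₁ : SenEquiv.{w} L' σ τ)
    (h₂ : SenEquiv.{w} L' τ ρ) : SenEquiv.{w} L' σ ρ :=
  fun N _ _ => (h₁ N).trans (h₂ N)

/-- The sentence `c = d` between two constant symbols. -/
def constEq (c d : L'.Constants) : L'.Sentence :=
  Term.equal c.term d.term

theorem realize_constEq {N : Type*} [L'.Structure N] {c d : L'.Constants} :
    N ⊨ constEq c d ↔ (c : N) = d := by
  simp only [Sentence.Realize, constEq, Formula.realize_equal, Term.realize_constants]

theorem realize_constEq_con {L : Language} {M : Type*} [L.Structure M] {x y : M} :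
    M ⊨ constEq (L.con x) (L.con y) ↔ x = y :=
  realize_constEq

theorem senEquiv_constEq_self (c d : L'.Constants) :
    SenEquiv.{w} L' (constEq c c) (constEq d d) :=
  fun _ _ _ => iff_of_true (realize_constEq.2 rfl) (realize_constEq.2 rfl)

theorem senEquiv_constEq_comm (c d : L'.Constants) :
    SenEquiv.{w} L' (constEq c d) (constEq d c) :=
  fun _ _ _ => realize_constEq.trans (eq_comm.trans realize_constEq.symm)

/-- Regularity of a binary operation on sentences: semantically equivalent first arguments yield
semantically equivalent values. Choice and commutativity are not part of the notion. -/
def RegularOp (f : L'.Sentence → L'.Sentence → L'.Sentence) : Prop :=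
  ∀ σ σ' τ, SenEquiv.{w} L' σ σ' → SenEquiv.{w} L' (f σ τ) (f σ' τ)

section

variable {f : L'.Sentence → L'.Sentence → L'.Sentence}

theorem RegularOp.congr (hreg : RegularOp.{w} f) (hcomm : ∀ σ τ, f σ τ = f τ σ)
    {σ σ' τ τ' : L'.Sentence} (hσ : SenEquiv.{w} L' σ σ') (hτ : SenEquiv.{w} L' τ τ') :
    SenEquiv.{w} L' (f σ τ) (f σ' τ') := by
  have hleft : SenEquiv.{w} L' (f σ τ) (f σ' τ) := hreg σ σ' τ hσ
  have hright : SenEquiv.{w} L' (f τ σ') (f τ' σ') := hreg τ τ' σ' hτ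
  rw [hcomm τ, hcomm τ'] at hright
  exact hleft.trans hright

theorem RegularOp.senEquiv_constEq_swap (hreg : RegularOp.{w} f) (hcomm : ∀ σ τ, f σ τ = f τ σ)
    (c d : L'.Constants) :
    SenEquiv.{w} L' (f (constEq c c) (constEq c d)) (f (constEq d c) (constEq d d)) := by
  rw [hcomm (constEq d c)]
  exact hreg.congr hcomm (senEquiv_constEq_self c d) (senEquiv_constEq_comm c d)

theorem realize_or_of_realize_choice (hchoice : ∀ σ τ, f σ τ = σ ∨ f σ τ = τ)
    {N : Type*} [L'.Structure N] {σ τ : L'.Sentence} (h : N ⊨ f σ τ) : N ⊨ σ ∨ N ⊨ τ := by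
  rcases hchoice σ τ with hσ | hτ
  · exact .inl (hσ ▸ h)
  · exact .inr (hτ ▸ h)

end

theorem not_existsUnique_of_iff {α : Sort*} {p : α → Prop} {a b : α} (hab : a ≠ b)
    (hp : ∀ x, p x → x = a ∨ x = b) (hiff : p a ↔ p b) : ¬ ∃! x, p x := by
  intro hunique
  have hboth : p a ∧ p b := by
    obtain ⟨x, hx⟩ := hunique.exists
    rcases hp x hx with rfl | rfl
    · exact ⟨hx, hiff.1 hx⟩
    · exact ⟨hiff.2 hx, hx⟩
  exact hab (hunique.unique hboth.1 hboth.2)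

/-- **No regular choice function realizes a unique superposed object.**
Let `M` be an `L`-structure and `a ≠ b` elements of `M`.  Then for every choice
function `f` on the sentences of `L(M)` that is *regular* (semantically equivalent
first arguments yield semantically equivalent values), it is not the case that there
is exactly one `x ∈ M` satisfying the collapsed sentence `f((x = a), (x = b))`;
i.e. no regular `f` makes `⟨M, f⟩` satisfy `(∃! v)((v = a)|(v = b))` under sentence
choice semantics. -/
theorem no_regular_choice_function_unique_superposition (L : Language) (M : Type w)
    [L.Structure M] (a b : M) (hab : a ≠ b)
    (f : L[[M]].Sentence → L[[M]].Sentence → L[[M]].Sentence)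
    (hchoice : ∀ σ τ : L[[M]].Sentence, f σ τ = σ ∨ f σ τ = τ)
    (hcomm : ∀ σ τ : L[[M]].Sentence, f σ τ = f τ σ)
    (hreg : ∀ σ σ' τ : L[[M]].Sentence,
      SenEquiv.{w} (L[[M]]) σ σ' → SenEquiv.{w} (L[[M]]) (f σ τ) (f σ' τ)) :
    ¬ (∃! x : M,
        M ⊨ f (Term.equal (Constants.term (L.con x)) (Constants.term (L.con a)))
              (Term.equal (Constants.term (L.con x)) (Constants.term (L.con b)))) := by
  have : Nonempty M := ⟨a⟩
  have hiff := RegularOp.senEquiv_constEq_swap hreg hcomm (L.con a) (L.con b) M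
  refine not_existsUnique_of_iff hab (fun x hx => ?_) hiff
  exact (realize_or_of_realize_choice hchoice hx).imp
    realize_constEq_con.1 realize_constEq_con.1
end

section
/- For every type A and every equivalence relation ≈ on A, there exists a choice function f on A (f a b ∈ {a, b} and f a b = f b a for all a, b ∈ A) that is regular with respect to ≈: for all a, a', b ∈ A, if a ≈ a' then f a b ≈ f a' b. (Such an f may be obtained by fixing a representative of each ≈-class, choosing on pairs of representatives, and transferring the choice to arbitrary pairs; this construction underlies the completeness proof for the regular-choice-function semantics.) -/
/-! Order the quotient linearly and refine this order lexicographically to `A`, so that the quotient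
map becomes monotone. Monotone maps commute with `min`, so the class of `min a b` depends only on
the classes of `a` and `b`. -/

theorem exists_linearOrder_monotone {α β : Type*} [LinearOrder β] (g : α → β) :
    ∃ _ : LinearOrder α, Monotone g := by
  obtain ⟨_, _⟩ := exists_wellFoundedLT α
  let graph : α → β ×ₗ α := fun a ↦ toLex (g a, a)
  have graph_injective : graph.Injective := fun _ _ h ↦ congrArg (fun p ↦ (ofLex p).2) h
  exact ⟨LinearOrder.lift' graph graph_injective, fun a b (h : graph a ≤ graph b) ↦
    Prod.Lex.monotone_fst (graph a) (graph b) h⟩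

/-- For every type `A` and every equivalence relation `≈` on `A` there is a choice
function `f` on `A` (`f a b ∈ {a, b}`, `f a b = f b a`) that is *regular* with respect
to `≈`: `a ≈ a'` implies `f a b ≈ f a' b`. -/
theorem exists_regular_choice_function {A : Type*} (r : A → A → Prop)
    (hr : Equivalence r) :
    ∃ f : A → A → A,
      (∀ a b : A, f a b = a ∨ f a b = b) ∧
      (∀ a b : A, f a b = f b a) ∧
      (∀ a a' b : A, r a a' → r (f a b) (f a' b)) := by
  let s : Setoid A := ⟨r, hr⟩
  obtain ⟨_, _⟩ := exists_wellFoundedLT (Quotient s)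
  obtain ⟨_, mk_monotone⟩ := exists_linearOrder_monotone (Quotient.mk s)
  refine ⟨min, min_choice, min_comm, fun a a' b h ↦ Quotient.exact (s := s) ?_⟩
  calc Quotient.mk s (min a b)
    _ = min (Quotient.mk s a) (Quotient.mk s b) := mk_monotone.map_min
    _ = min (Quotient.mk s a') (Quotient.mk s b) := by rw [Quotient.sound h]
    _ = Quotient.mk s (min a' b) := mk_monotone.map_min.symm
end
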